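/- Let A_1, A_2 be closed symmetric operators in a separable Hilbert space H whose Cayley transforms V_1, V_2 commute whenever possible, and suppose a generalized resolvent of the pair A_1, A_2 exists. Let R_{u;z_1,z_2}(V_1,V_2) be an arbitrary generalized resolvent of V_1, V_2. Then R_{u;z_1,z_2}(V_1,V_2) is generated by commuting unitary extensions U_1, U_2 of V_1, V_2 having no nonzero fixed elements if and only if Φ_j(z_j) ∈ S_adm;V_j(𝔻; N_0(V_j), N_∞(V_j)) for j = 1, 2, where Φ_1(z_1) = [(1/z_1)E_H − (2/z_1)(R_{u;z_1,0} + E_H)^{−1}]|_{H ⊖ D(V_1)} for z_1 ∈ 𝔻∖{0}, and Φ_2(z_2) = [(1/z_2)E_H − (2/z_2)(R_{u;0,z_2} + E_H)^{−1}]|_{H ⊖ D(V_2)} for z_2 ∈ 𝔻∖{0}, extended to z_j = 0 by weak continuity. -/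

import Mathlib

/-! The parameter `Φ(z)` of Chumakin's formula is the restriction to `N₀(V)` of the transfer
function `T(z) = P_H U (1 - z Q U)⁻¹|_H`, where `U` is any unitary extension of `V` generating the
generalized resolvent and `Q` is the projection onto `K ⊖ H` (`transfer_formula`, a Schur
complement computation). The state `x = (1 - z Q U)⁻¹ h` satisfies `P_H x = h`,
`(1 - zU) x = (1 - zT(z)) h` and `‖h‖² - ‖T(z)h‖² = (1 - |z|²) ‖Q U x‖²`; in particular `Φ` always
lies in the class `S`, and only admissibility is at stake.

The core is `admissible_iff`: `Φ` is admissible if and only if `H` is orthogonal to the fixed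
vectors of `U`.
* If `U f = f` and `g = P_H f`, then the states of `g` stay within a bounded distance of `f` in
  every sector, so `T g → g` with defect `O(1/|λ|)` (`fixed_sector`). Splitting
  `g = v + ψ = V v + φ` along `D(V)` and `R(V)` gives `ψ - φ = V v - v ∈ D(A)`, and `Φ ψ → φ`;
  admissibility forces `ψ = 0`, so that `V` fixes `g`. A Cayley transform has no nonzero fixed
  elements, whence `g = 0`.
* Conversely a pair `ψ, φ` as in the definition of admissibility yields such a vector
  `g = v + ψ = V v + φ`. Its states are bounded along a subfamily and `(1 - U) x → 0`, while
  `P_H x = g`; as `g` lies in `(ker (1 - U))ᗮ`, the closure of the range of `(1 - U)*`, this gives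
  `‖g‖² = ⟨g, x⟩ → 0` (`eq_zero_of_sector`), hence `ψ = 0`.

Finally, when `H` is orthogonal to the fixed vectors of both commuting operators `U₁, U₂`, these
can be restricted to the orthogonal complement of all fixed vectors, which reduces both and
contains `H`, without changing the generalized resolvent (`exists_noFixed`). -/

noncomputable section

open Complex Filter Topology Submodule Metric
open scoped InnerProductSpace ComplexOrder

/-- A closed isometric operator in a complex Hilbert space `H`: a linear isometry
defined on a closed subspace `dom` of `H`. -/
structure ClosedIsometry (H : Type*) [NormedAddCommGroup H] [InnerProductSpace ℂ H]
    [CompleteSpace H] where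
  dom : Submodule ℂ H
  dom_closed : IsClosed (dom : Set H)
  map : ↥dom →ₗᵢ[ℂ] H

namespace ClosedIsometry

variable {H : Type*} [NormedAddCommGroup H] [InnerProductSpace ℂ H] [CompleteSpace H]

/-- The defect subspace `N₀(V) = H ⊖ D(V)`. -/
def N0 (V : ClosedIsometry H) : Submodule ℂ H := V.domᗮ

/-- The defect subspace `N_∞(V) = H ⊖ R(V)`. -/
def Ninf (V : ClosedIsometry H) : Submodule ℂ H := (LinearMap.range V.map.toLinearMap)ᗮ

/-- `V` has no nonzero fixed elements. -/
def NoFixed (V : ClosedIsometry H) : Prop := ∀ x : V.dom, V.map x = (x : H) → (x : H) = 0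

instance (V : ClosedIsometry H) : CompleteSpace V.dom := V.dom_closed.completeSpace_coe

instance (V : ClosedIsometry H) : HasOrthogonalProjection V.N0 :=
  inferInstanceAs (HasOrthogonalProjection V.domᗮ)

/-- The operator `V ⊕ F` on the whole of `H`, where `F : N₀(V) → H`,
`(V ⊕ F)(v + n) = V v + F n` for `v ∈ D(V)`, `n ∈ N₀(V)`. -/
def dsum (V : ClosedIsometry H) (F : ↥V.N0 →L[ℂ] H) : H →L[ℂ] H :=
  V.map.toContinuousLinearMap.comp (orthogonalProjection V.dom) +
    F.comp (orthogonalProjection V.N0)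

end ClosedIsometry

/-- The continuous linear map underlying a unitary operator (linear isometric equivalence). -/
def uCLM {K : Type*} [NormedAddCommGroup K] [InnerProductSpace ℂ K] [CompleteSpace K]
    (U : K ≃ₗᵢ[ℂ] K) : K →L[ℂ] K :=
  U.toLinearIsometry.toContinuousLinearMap

/-- `U(z) = (E + zU)(E − zU)^{-1}` for a bounded operator `U`. -/
def moebius {K : Type*} [NormedAddCommGroup K] [InnerProductSpace ℂ K] [CompleteSpace K]
    (z : ℂ) (W : K →L[ℂ] K) : K →L[ℂ] K :=
  (1 + z • W) * Ring.inverse (1 - z • W)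

/-- A Hilbert space containing (an isometric copy of) `H`. -/
structure HilbertExt (H : Type*) [NormedAddCommGroup H] [InnerProductSpace ℂ H]
    [CompleteSpace H] where
  car : Type
  [ng : NormedAddCommGroup car]
  [ip : InnerProductSpace ℂ car]
  [cs : CompleteSpace car]
  emb : H →ₗᵢ[ℂ] car

attribute [instance] HilbertExt.ng HilbertExt.ip HilbertExt.cs

/-- A self-adjoint operator in a Hilbert space `K`, encoded together with its resolvent
family: a densely defined symmetric operator such that `B − λ` is boundedly invertible
for every non-real `λ`. -/
structure SAOp (K : Type*) [NormedAddCommGroup K] [InnerProductSpace ℂ K]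
    [CompleteSpace K] where
  op : K →ₗ.[ℂ] K
  dense_dom : Dense (op.domain : Set K)
  symm : ∀ x y : op.domain, ⟪op x, (y : K)⟫_ℂ = ⟪(x : K), op y⟫_ℂ
  res : ℂ → (K →L[ℂ] K)
  mem_res : ∀ (l : ℂ), l.im ≠ 0 → ∀ x : K, res l x ∈ op.domain
  res_right : ∀ (l : ℂ) (hl : l.im ≠ 0) (x : K),
    op ⟨res l x, mem_res l hl x⟩ - l • res l x = x
  res_left : ∀ (l : ℂ) (_ : l.im ≠ 0) (x : op.domain), res l (op x - l • (x : K)) = (x : K)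

/-- `(E + λB)(B − λE)^{-1} x` for a self-adjoint operator `B`. -/
def SAOp.cay {K : Type*} [NormedAddCommGroup K] [InnerProductSpace ℂ K] [CompleteSpace K]
    (B : SAOp K) {l : ℂ} (hl : l.im ≠ 0) (x : K) : K :=
  B.res l x + l • B.op ⟨B.res l x, B.mem_res l hl x⟩

/-- `B ⊇ A` along the isometric embedding `ι`. -/
def ExtendsAlong {H K : Type*} [NormedAddCommGroup H] [InnerProductSpace ℂ H] [CompleteSpace H]
    [NormedAddCommGroup K] [InnerProductSpace ℂ K] [CompleteSpace K]
    (ι : H →ₗᵢ[ℂ] K) (A : H →ₗ.[ℂ] H) (B : K →ₗ.[ℂ] K) : Prop :=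
  ∀ x : A.domain, ∃ hx : ι x ∈ B.domain, B ⟨ι x, hx⟩ = ι (A x)

/-- `R` is a generalized resolvent of the pair of symmetric operators `A₁, A₂`:
it is the compression to `H` of `(E+λ₁B₁)(B₁−λ₁)⁻¹(E+λ₂B₂)(B₂−λ₂)⁻¹` for some commuting
self-adjoint extensions `B₁ ⊇ A₁`, `B₂ ⊇ A₂` in a Hilbert space containing `H`
(normalized by `0` at real points). -/
def IsGenResolventPair {H : Type*} [NormedAddCommGroup H] [InnerProductSpace ℂ H]
    [CompleteSpace H] (A₁ A₂ : H →ₗ.[ℂ] H) (R : ℂ → ℂ → (H →L[ℂ] H)) : Prop :=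
  (∀ l₁ l₂ : ℂ, l₁.im = 0 ∨ l₂.im = 0 → R l₁ l₂ = 0) ∧
  ∃ (e : HilbertExt H) (B₁ B₂ : SAOp e.car),
    ExtendsAlong e.emb A₁ B₁.op ∧ ExtendsAlong e.emb A₂ B₂.op ∧
    (∀ l m : ℂ, l.im ≠ 0 → m.im ≠ 0 → B₁.res l * B₂.res m = B₂.res m * B₁.res l) ∧
    ∀ (l₁ l₂ : ℂ) (h₁ : l₁.im ≠ 0) (h₂ : l₂.im ≠ 0) (x y : H),
      ⟪y, R l₁ l₂ x⟫_ℂ = ⟪e.emb y, B₁.cay h₁ (B₂.cay h₂ (e.emb x))⟫_ℂ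

/-- `U` is a unitary extension of the closed isometric operator `V` along `ι`. -/
def ExtendsIso {H K : Type*} [NormedAddCommGroup H] [InnerProductSpace ℂ H] [CompleteSpace H]
    [NormedAddCommGroup K] [InnerProductSpace ℂ K] [CompleteSpace K]
    (ι : H →ₗᵢ[ℂ] K) (V : ClosedIsometry H) (U : K ≃ₗᵢ[ℂ] K) : Prop :=
  ∀ x : V.dom, U (ι x) = ι (V.map x)

/-- `V = (A+i)(A−i)^{-1}` is the Cayley transform of the symmetric operator `A`,
equivalently `A = i(V+E)(V−E)^{-1}` (graph characterization). -/
def IsCayleyOf {H : Type*} [NormedAddCommGroup H] [InnerProductSpace ℂ H] [CompleteSpace H]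
    (V : ClosedIsometry H) (A : H →ₗ.[ℂ] H) : Prop :=
  ∀ u w : H, (∃ hu : u ∈ V.dom, V.map ⟨u, hu⟩ = w) ↔
    ∃ x : A.domain, A x - Complex.I • (x : H) = u ∧ A x + Complex.I • (x : H) = w

/-- The Cayley transforms `V₁, V₂` commute whenever possible. -/
def CommuteWherePossible {H : Type*} [NormedAddCommGroup H] [InnerProductSpace ℂ H]
    [CompleteSpace H] (V₁ V₂ : ClosedIsometry H) : Prop :=
  ∀ (h : H) (h₁ : h ∈ V₁.dom) (h₂ : h ∈ V₂.dom)
    (h₁₂ : V₂.map ⟨h, h₂⟩ ∈ V₁.dom) (h₂₁ : V₁.map ⟨h, h₁⟩ ∈ V₂.dom),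
    V₁.map ⟨V₂.map ⟨h, h₂⟩, h₁₂⟩ = V₂.map ⟨V₁.map ⟨h, h₁⟩, h₂₁⟩

/-- The filter `λ → ∞` inside the sector `ℂ_+^ε = {λ : ε < arg λ < π − ε}`. -/
def sectorFilter (ε : ℝ) : Filter ℂ :=
  Filter.comap (‖·‖) Filter.atTop ⊓ 𝓟 {l : ℂ | ε < l.arg ∧ l.arg < Real.pi - ε}

/-- The function `λ ↦ F(λ)` (defined on `ℂ₊`) with values in contractions from
`N₀(V) = N_i(A)` to `H` is admissible with respect to the symmetric operator `A`:
whenever `ψ ∈ N_i(A)`, `φ ∈ N_{−i}(A)` with `ψ − φ ∈ D(A)` (i.e. `X_i ψ = φ`),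
`F(λ)ψ → φ` inside some sector and `|λ|(‖ψ‖ − ‖F(λ)ψ‖)` has finite lower limit there,
it follows that `ψ = 0`. -/
def AdmissibleFor {H : Type*} [NormedAddCommGroup H] [InnerProductSpace ℂ H] [CompleteSpace H]
    (A : H →ₗ.[ℂ] H) (V : ClosedIsometry H)
    (F : ℂ → (↥V.N0 →L[ℂ] H)) : Prop :=
  ∀ (ψ : ↥V.N0) (φ : H), φ ∈ V.Ninf → (ψ : H) - φ ∈ A.domain →
    (∃ ε : ℝ, 0 < ε ∧ ε < Real.pi / 2 ∧
      Tendsto (fun l => F l ψ) (sectorFilter ε) (𝓝 φ) ∧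
      ∃ C : ℝ, ∃ᶠ l in sectorFilter ε, ‖l‖ * (‖(ψ : H)‖ - ‖F l ψ‖) ≤ C) →
    (ψ : H) = 0

/-- The class `S(𝔻; N₀(V), N_∞(V))`: analytic on the unit disc, contraction valued,
mapping `N₀(V)` into `N_∞(V)`. -/
def InClassS {H : Type*} [NormedAddCommGroup H] [InnerProductSpace ℂ H] [CompleteSpace H]
    (V : ClosedIsometry H) (Φ : ℂ → (↥V.N0 →L[ℂ] H)) : Prop :=
  DifferentiableOn ℂ Φ (Metric.ball 0 1) ∧
  (∀ z ∈ Metric.ball (0 : ℂ) 1, ‖Φ z‖ ≤ 1) ∧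
  ∀ z ∈ Metric.ball (0 : ℂ) 1, ∀ n : ↥V.N0, Φ z n ∈ V.Ninf

open MeasureTheory in
/-- A non-negative Borel measure `μ` on `ℝ²` is a solution of the moment problem with
moments `s`. -/
def IsMomentSolution (s : ℕ → ℕ → ℝ) (μ : MeasureTheory.Measure (ℝ × ℝ)) : Prop :=
  (∀ m n : ℕ, MeasureTheory.Integrable (fun t : ℝ × ℝ => t.1 ^ m * t.2 ^ n) μ) ∧
  ∀ m n : ℕ, ∫ t : ℝ × ℝ, t.1 ^ m * t.2 ^ n ∂μ = s m n

/-- The kernel `((1+λ₁t₁)(1+λ₂t₂))/((t₁−λ₁)(t₂−λ₂))`. -/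
def momKernel (l₁ l₂ : ℂ) (t : ℝ × ℝ) : ℂ :=
  ((1 + l₁ * (t.1 : ℂ)) * (1 + l₂ * (t.2 : ℂ))) /
    (((t.1 : ℂ) - l₁) * ((t.2 : ℂ) - l₂))

/-- The shift corresponding to multiplication by `t₁` on coefficient families. -/
def sh1 : ((ℕ × ℕ) →₀ ℂ) →ₗ[ℂ] ((ℕ × ℕ) →₀ ℂ) :=
  Finsupp.lmapDomain ℂ ℂ (fun p => (p.1 + 1, p.2))

/-- The shift corresponding to multiplication by `t₂` on coefficient families. -/
def sh2 : ((ℕ × ℕ) →₀ ℂ) →ₗ[ℂ] ((ℕ × ℕ) →₀ ℂ) :=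
  Finsupp.lmapDomain ℂ ℂ (fun p => (p.1, p.2 + 1))

/-- The Carleman-type condition (1.2). -/
def CarlemanCond (s : ℕ → ℕ → ℝ) : Prop :=
  ∀ m : ℕ, ¬ Summable (fun k : ℕ =>
    (s (2 * m) (2 * (k + 1)) + s (2 * m + 2) (2 * (k + 1))) ^
      (-(1 : ℝ) / (2 * ((k : ℝ) + 1))))

/-- Positive semi-definiteness of the two-dimensional moment sequence. -/
def IsPosSemidef (s : ℕ → ℕ → ℝ) : Prop :=
  ∀ α : (ℕ × ℕ) →₀ ℂ,
    0 ≤ ∑ p ∈ α.support, ∑ q ∈ α.support,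
      α p * (starRingEnd ℂ) (α q) * (s (p.1 + q.1) (p.2 + q.2) : ℂ)

end

noncomputable section

open Complex Metric
open scoped InnerProductSpace

/-- A generalized resolvent of the pair of closed isometric operators `V₁, V₂`
(generated by some commuting unitary extensions; normalized by `0` when `|z_j| = 1`). -/
def IsGenResolventPairIso {H : Type} [NormedAddCommGroup H] [InnerProductSpace ℂ H]
    [CompleteSpace H] (V₁ V₂ : ClosedIsometry H) (R : ℂ → ℂ → (H →L[ℂ] H)) : Prop :=
  (∀ z₁ z₂ : ℂ, ‖z₁‖ = 1 ∨ ‖z₂‖ = 1 → R z₁ z₂ = 0) ∧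
  ∃ (e : HilbertExt H) (U₁ U₂ : e.car ≃ₗᵢ[ℂ] e.car),
    ExtendsIso e.emb V₁ U₁ ∧ ExtendsIso e.emb V₂ U₂ ∧
    (∀ x : e.car, U₁ (U₂ x) = U₂ (U₁ x)) ∧
    ∀ (z₁ z₂ : ℂ), ‖z₁‖ ≠ 1 → ‖z₂‖ ≠ 1 → ∀ x y : H,
      ⟪y, R z₁ z₂ x⟫_ℂ =
        ⟪e.emb y, (moebius z₁ (uCLM U₁) * moebius z₂ (uCLM U₂)) (e.emb x)⟫_ℂ

/-! ### The transfer function of a unitary operator relative to a subspace -/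

section Transfer

variable {H K : Type*} [NormedAddCommGroup H] [InnerProductSpace ℂ H] [CompleteSpace H]
  [NormedAddCommGroup K] [InnerProductSpace ℂ K] [CompleteSpace K]

/-- The compression map `K → H`, adjoint to the embedding `ι : H → K`. -/
def coemb (ι : H →ₗᵢ[ℂ] K) : K →L[ℂ] H :=
  ContinuousLinearMap.adjoint ι.toContinuousLinearMap

/-- The orthogonal projection of `K` onto `K ⊖ ι H`. -/
def coproj (ι : H →ₗᵢ[ℂ] K) : K →L[ℂ] K :=
  1 - ι.toContinuousLinearMap ∘L coemb ι

/-- The operator `h ↦ x = (1 - z Q U)⁻¹ ι h`, where `Q` is the projection onto `K ⊖ ι H`. -/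
def stateMap (ι : H →ₗᵢ[ℂ] K) (U : K ≃ₗᵢ[ℂ] K) (z : ℂ) : H →L[ℂ] K :=
  (Ring.inverse (1 - z • (coproj ι * uCLM U))) ∘L ι.toContinuousLinearMap

/-- The transfer function `T(z) = P_H U (1 - z Q U)⁻¹|_H` of `U` with respect to `H`. -/
def transfer (ι : H →ₗᵢ[ℂ] K) (U : K ≃ₗᵢ[ℂ] K) (z : ℂ) : H →L[ℂ] H :=
  coemb ι ∘L uCLM U ∘L stateMap ι U z

@[simp] lemma uCLM_apply (U : K ≃ₗᵢ[ℂ] K) (x : K) : uCLM U x = U x := rfl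

lemma inner_coemb (ι : H →ₗᵢ[ℂ] K) (h : H) (x : K) : ⟪h, coemb ι x⟫_ℂ = ⟪ι h, x⟫_ℂ :=
  ContinuousLinearMap.adjoint_inner_right ι.toContinuousLinearMap h x

lemma coemb_inner (ι : H →ₗᵢ[ℂ] K) (h : H) (x : K) : ⟪coemb ι x, h⟫_ℂ = ⟪x, ι h⟫_ℂ :=
  ContinuousLinearMap.adjoint_inner_left ι.toContinuousLinearMap h x

@[simp] lemma coemb_emb (ι : H →ₗᵢ[ℂ] K) (h : H) : coemb ι (ι h) = h := by
  refine ext_inner_left ℂ fun v => ?_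
  rw [inner_coemb, ι.inner_map_map]

lemma coproj_apply (ι : H →ₗᵢ[ℂ] K) (x : K) : coproj ι x = x - ι (coemb ι x) := rfl

@[simp] lemma coemb_coproj (ι : H →ₗᵢ[ℂ] K) (x : K) : coemb ι (coproj ι x) = 0 := by
  rw [coproj_apply, map_sub, coemb_emb, sub_self]

@[simp] lemma coproj_emb (ι : H →ₗᵢ[ℂ] K) (h : H) : coproj ι (ι h) = 0 := by
  rw [coproj_apply, coemb_emb, sub_self]

lemma emb_add_coproj (ι : H →ₗᵢ[ℂ] K) (x : K) : ι (coemb ι x) + coproj ι x = x := by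
  rw [coproj_apply]; abel

lemma inner_emb_coproj (ι : H →ₗᵢ[ℂ] K) (h : H) (x : K) : ⟪ι h, coproj ι x⟫_ℂ = 0 := by
  rw [← inner_coemb, coemb_coproj, inner_zero_right]

lemma norm_sq_decomp (ι : H →ₗᵢ[ℂ] K) (h : H) (c : ℂ) (x : K) :
    ‖ι h + c • coproj ι x‖ ^ 2 = ‖h‖ ^ 2 + ‖c‖ ^ 2 * ‖coproj ι x‖ ^ 2 := by
  have h0 : ⟪ι h, c • coproj ι x⟫_ℂ = 0 := by
    rw [inner_smul_right, inner_emb_coproj, mul_zero]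
  have := norm_add_sq_eq_norm_sq_add_norm_sq_of_inner_eq_zero _ _ h0
  rw [sq, this, norm_smul, ι.norm_map]; ring

lemma norm_sq_eq (ι : H →ₗᵢ[ℂ] K) (x : K) :
    ‖x‖ ^ 2 = ‖coemb ι x‖ ^ 2 + ‖coproj ι x‖ ^ 2 := by
  have := norm_sq_decomp ι (coemb ι x) 1 x
  rwa [one_smul, emb_add_coproj, norm_one, one_pow, one_mul] at this

lemma norm_coproj_le (ι : H →ₗᵢ[ℂ] K) (x : K) : ‖coproj ι x‖ ≤ ‖x‖ := by
  have := norm_sq_eq ι x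
  exact abs_le_of_sq_le_sq' (by nlinarith [sq_nonneg ‖coemb ι x‖]) (norm_nonneg _) |>.2

lemma norm_coemb_le (ι : H →ₗᵢ[ℂ] K) (x : K) : ‖coemb ι x‖ ≤ ‖x‖ := by
  have := norm_sq_eq ι x
  exact abs_le_of_sq_le_sq' (by nlinarith [sq_nonneg ‖coproj ι x‖]) (norm_nonneg _) |>.2

lemma isUnit_state (ι : H →ₗᵢ[ℂ] K) (U : K ≃ₗᵢ[ℂ] K) {z : ℂ} (hz : ‖z‖ < 1) :
    IsUnit (1 - z • (coproj ι * uCLM U)) := by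
  apply isUnit_one_sub_of_norm_lt_one
  have h1 : ‖coproj ι * uCLM U‖ ≤ 1 := by
    refine ContinuousLinearMap.opNorm_le_bound _ zero_le_one fun x => ?_
    rw [one_mul]
    exact (norm_coproj_le ι _).trans (U.norm_map x).le
  rw [norm_smul]
  nlinarith [norm_nonneg z]

lemma state_eq (ι : H →ₗᵢ[ℂ] K) (U : K ≃ₗᵢ[ℂ] K) {z : ℂ} (hz : ‖z‖ < 1) (h : H) :
    stateMap ι U z h = ι h + z • coproj ι (U (stateMap ι U z h)) := by
  have := congrArg (fun F : K →L[ℂ] K => F (ι h))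
    (Ring.mul_inverse_cancel _ (isUnit_state ι U hz))
  simp only [mul_apply_eq_comp, sub_apply,
    one_apply_eq_self, smul_apply, uCLM_apply] at this
  exact sub_eq_iff_eq_add.1 this

lemma state_unique (ι : H →ₗᵢ[ℂ] K) (U : K ≃ₗᵢ[ℂ] K) {z : ℂ} (hz : ‖z‖ < 1) (h : H) (x : K)
    (hx : x = ι h + z • coproj ι (U x)) : stateMap ι U z h = x := by
  have := congrArg (fun F : K →L[ℂ] K => F x)
    (Ring.inverse_mul_cancel _ (isUnit_state ι U hz))
  simp only [mul_apply_eq_comp, sub_apply,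
    one_apply_eq_self, smul_apply, uCLM_apply] at this
  rw [sub_eq_iff_eq_add.2 hx] at this
  exact this

lemma coemb_state (ι : H →ₗᵢ[ℂ] K) (U : K ≃ₗᵢ[ℂ] K) {z : ℂ} (hz : ‖z‖ < 1) (h : H) :
    coemb ι (stateMap ι U z h) = h := by
  rw [state_eq ι U hz h, map_add, map_smul, coemb_emb, coemb_coproj, smul_zero, add_zero]

/-- `(1 - zU)x = ι(1 - zT(z))h` for `x = (1 - zQU)⁻¹ ι h`: the Schur complement identity. -/
lemma state_sub (ι : H →ₗᵢ[ℂ] K) (U : K ≃ₗᵢ[ℂ] K) {z : ℂ} (hz : ‖z‖ < 1) (h : H) :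
    stateMap ι U z h - z • U (stateMap ι U z h) = ι (h - z • transfer ι U z h) := by
  set x := stateMap ι U z h with hx
  have h1 : x = ι h + z • coproj ι (U x) := state_eq ι U hz h
  have h2 : transfer ι U z h = coemb ι (U x) := rfl
  rw [coproj_apply] at h1
  rw [h2, map_sub, map_smul]
  nth_rw 1 [h1]
  rw [smul_sub]; abel

/-- The defect of contractivity of `T(z)` is carried by the component of `Ux` outside `H`. -/
lemma transfer_defect (ι : H →ₗᵢ[ℂ] K) (U : K ≃ₗᵢ[ℂ] K) {z : ℂ} (hz : ‖z‖ < 1) (h : H) :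
    ‖h‖ ^ 2 - ‖transfer ι U z h‖ ^ 2 =
      (1 - ‖z‖ ^ 2) * ‖coproj ι (U (stateMap ι U z h))‖ ^ 2 := by
  have h1 := norm_sq_decomp ι h z (U (stateMap ι U z h))
  rw [← state_eq ι U hz h] at h1
  have h2 := norm_sq_eq ι (U (stateMap ι U z h))
  rw [U.norm_map] at h2
  have h3 : transfer ι U z h = coemb ι (U (stateMap ι U z h)) := rfl
  rw [h3]; linarith

lemma norm_state_sq (ι : H →ₗᵢ[ℂ] K) (U : K ≃ₗᵢ[ℂ] K) {z : ℂ} (hz : ‖z‖ < 1) (h : H) :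
    ‖stateMap ι U z h‖ ^ 2 =
      ‖h‖ ^ 2 + ‖z‖ ^ 2 * ‖coproj ι (U (stateMap ι U z h))‖ ^ 2 := by
  have h1 := norm_sq_decomp ι h z (U (stateMap ι U z h))
  rwa [← state_eq ι U hz h] at h1

lemma norm_transfer_le (ι : H →ₗᵢ[ℂ] K) (U : K ≃ₗᵢ[ℂ] K) {z : ℂ} (hz : ‖z‖ < 1) (h : H) :
    ‖transfer ι U z h‖ ≤ ‖h‖ := by
  have h1 := transfer_defect ι U hz h
  have h2 : 0 ≤ (1 - ‖z‖ ^ 2) * ‖coproj ι (U (stateMap ι U z h))‖ ^ 2 := by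
    have : 0 ≤ 1 - ‖z‖ ^ 2 := by nlinarith [norm_nonneg z]
    positivity
  exact abs_le_of_sq_le_sq' (by linarith) (norm_nonneg _) |>.2

lemma transfer_opNorm_le (ι : H →ₗᵢ[ℂ] K) (U : K ≃ₗᵢ[ℂ] K) {z : ℂ} (hz : ‖z‖ < 1) :
    ‖transfer ι U z‖ ≤ 1 :=
  ContinuousLinearMap.opNorm_le_bound _ zero_le_one fun x => by
    rw [one_mul]; exact norm_transfer_le ι U hz x

lemma transfer_differentiableOn (ι : H →ₗᵢ[ℂ] K) (U : K ≃ₗᵢ[ℂ] K) :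
    DifferentiableOn ℂ (transfer ι U) (ball 0 1) := by
  intro z hz
  apply DifferentiableAt.differentiableWithinAt
  have h1 : DifferentiableAt ℂ (fun z : ℂ => Ring.inverse (1 - z • (coproj ι * uCLM U))) z := by
    have h2 := differentiableAt_inverse (𝕜 := ℂ) (isUnit_state ι U (mem_ball_zero_iff.1 hz))
    exact h2.comp z (by fun_prop :
      DifferentiableAt ℂ (fun z : ℂ => 1 - z • (coproj ι * uCLM U)) z)
  unfold transfer stateMap
  fun_prop

lemma transfer_dom (ι : H →ₗᵢ[ℂ] K) (U : K ≃ₗᵢ[ℂ] K) {V : ClosedIsometry H}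
    (hU : ExtendsIso ι V U) {z : ℂ} (hz : ‖z‖ < 1) (v : V.dom) :
    transfer ι U z v = V.map v := by
  have h1 : stateMap ι U z v = ι v :=
    state_unique ι U hz _ _ (by rw [hU v, coproj_emb, smul_zero, add_zero])
  have h2 : transfer ι U z v = coemb ι (U (stateMap ι U z v)) := rfl
  rw [h2, h1, hU v, coemb_emb]

lemma transfer_N0 (ι : H →ₗᵢ[ℂ] K) (U : K ≃ₗᵢ[ℂ] K) {V : ClosedIsometry H}
    (hU : ExtendsIso ι V U) {z : ℂ} (hz : ‖z‖ < 1) (n : V.N0) :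
    transfer ι U z n ∈ V.Ninf := by
  rw [ClosedIsometry.Ninf, Submodule.mem_orthogonal]
  rintro _ ⟨v, rfl⟩
  have h2 : transfer ι U z n = coemb ι (U (stateMap ι U z n)) := rfl
  have h3 : ⟪V.map v, transfer ι U z n⟫_ℂ = ⟪(v : H), (n : H)⟫_ℂ := by
    rw [h2, inner_coemb, ← hU v, U.inner_map_map, ← inner_coemb, coemb_state ι U hz]
  exact h3.trans ((Submodule.mem_orthogonal _ _).1 n.2 _ v.2)

/-- The compressed resolvent is `(1 - zT(z))⁻¹`, so that the parameter of Chumakin's formula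
is the restriction of the transfer function to `N₀(V)`. -/
lemma transfer_formula (ι : H →ₗᵢ[ℂ] K) (U : K ≃ₗᵢ[ℂ] K) {z : ℂ} (hz : ‖z‖ < 1) (hz0 : z ≠ 0)
    (R : H →L[ℂ] H)
    (hR : ∀ x y : H, ⟪y, R x⟫_ℂ = ⟪ι y, moebius z (uCLM U) (ι x)⟫_ℂ) (n : H) :
    z⁻¹ • n - (2 * z⁻¹) • (Ring.inverse (R + 1) : H →L[ℂ] H) n = transfer ι U z n := by
  have hu : IsUnit (1 - z • transfer ι U z) := by
    apply isUnit_one_sub_of_norm_lt_one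
    rw [norm_smul]
    nlinarith [norm_nonneg z, transfer_opNorm_le ι U hz]
  have hw : IsUnit (1 - z • uCLM U) := by
    apply isUnit_one_sub_of_norm_lt_one
    have : ‖uCLM U‖ ≤ 1 := U.toLinearIsometry.norm_toContinuousLinearMap_le
    rw [norm_smul]
    nlinarith [norm_nonneg z]
  have key : (R + 1) * ((2 : ℂ)⁻¹ • (1 - z • transfer ι U z)) = 1 := by
    ext h
    set x := stateMap ι U z h with hx
    have hinv : Ring.inverse (1 - z • uCLM U) (ι (h - z • transfer ι U z h)) = x := by
      rw [← state_sub ι U hz h]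
      exact congrArg (fun F : K →L[ℂ] K => F x) (Ring.inverse_mul_cancel _ hw)
    have hRk : R (h - z • transfer ι U z h) = (2 : ℂ) • h - (h - z • transfer ι U z h) := by
      refine ext_inner_left ℂ fun y => ?_
      rw [hR, moebius, mul_apply_eq_comp, hinv]
      have h5 : (1 + z • uCLM U) x = (2 : ℂ) • x - ι (h - z • transfer ι U z h) := by
        rw [← state_sub ι U hz h]
        simp only [add_apply, one_apply_eq_self,
          smul_apply, uCLM_apply, ← hx, two_smul]
        abel
      rw [h5, ← inner_coemb, map_sub, map_smul, coemb_state ι U hz, coemb_emb]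
    simp only [mul_apply_eq_comp, add_apply,
      one_apply_eq_self, smul_apply,
      sub_apply, map_smul]
    rw [hRk, sub_add_cancel, smul_smul, inv_mul_cancel₀ two_ne_zero, one_smul]
  have hinv : Ring.inverse (R + 1) = (2 : ℂ)⁻¹ • (1 - z • transfer ι U z) := by
    obtain ⟨u, hu2⟩ : IsUnit ((2 : ℂ)⁻¹ • (1 - z • transfer ι U z)) :=
      (Units.mk0 (2 : ℂ)⁻¹ (by norm_num)) • hu.unit |>.isUnit
    rw [← hu2] at key ⊢
    rw [Units.mul_eq_one_iff_eq_inv.1 key, Ring.inverse_unit, inv_inv]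
  rw [hinv]
  simp only [smul_apply, sub_apply,
    one_apply_eq_self, smul_sub, smul_smul]
  have e1 : 2 * z⁻¹ * 2⁻¹ = z⁻¹ := by ring
  have e2 : 2 * z⁻¹ * (2⁻¹ * z) = 1 := by field_simp
  rw [e1, e2, one_smul]; abel

/-! ### States generated by fixed vectors -/

/-- The distance from a fixed vector `f` of `U` to the state generated by its compression:
with `d = f - x` one has `d = (1 - z) Q f + z Q U d`. -/
lemma fixed_sub_state (ι : H →ₗᵢ[ℂ] K) (U : K ≃ₗᵢ[ℂ] K) {z : ℂ} (hz : ‖z‖ < 1) {f : K}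
    (hf : U f = f) :
    (1 - ‖z‖) * ‖f - stateMap ι U z (coemb ι f)‖ ≤ ‖1 - z‖ * ‖f‖ := by
  set x := stateMap ι U z (coemb ι f) with hx
  have h1 : x = ι (coemb ι f) + z • coproj ι (U x) := state_eq ι U hz _
  have h2 : f - x = (1 - z) • coproj ι f + z • coproj ι (U (f - x)) := by
    nth_rw 1 [h1, ← emb_add_coproj ι f]
    rw [map_sub, map_sub, hf, sub_smul, one_smul, smul_sub]
    abel
  have h3 : ‖f - x‖ ≤ ‖1 - z‖ * ‖f‖ + ‖z‖ * ‖f - x‖ := by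
    calc ‖f - x‖ = ‖(1 - z) • coproj ι f + z • coproj ι (U (f - x))‖ := by rw [← h2]
      _ ≤ ‖1 - z‖ * ‖coproj ι f‖ + ‖z‖ * ‖coproj ι (U (f - x))‖ := by
        refine (norm_add_le _ _).trans ?_
        rw [norm_smul, norm_smul]
      _ ≤ _ := by
        have := (norm_coproj_le ι (U (f - x))).trans (U.norm_map _).le
        gcongr
        exact norm_coproj_le ι f
  linarith

/-- Pairing `(1 - zU)x` with a fixed vector `f` of `U` shows `zT(z)g → g` for `g = P_H f`, as
soon as the states stay bounded. -/
lemma fixed_transfer_sq (ι : H →ₗᵢ[ℂ] K) (U : K ≃ₗᵢ[ℂ] K) {z : ℂ} (hz : ‖z‖ < 1) {f : K}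
    (hf : U f = f) :
    ‖coemb ι f - z • transfer ι U z (coemb ι f)‖ ^ 2 ≤
      2 * (‖1 - z‖ * ‖f‖ * ‖stateMap ι U z (coemb ι f)‖) := by
  set x := stateMap ι U z (coemb ι f) with hx
  set g := coemb ι f with hg
  set w := z • transfer ι U z g with hw
  have h1 : x - z • U x = ι (g - w) := state_sub ι U hz g
  have h2 : ⟪g, g - w⟫_ℂ = (1 - z) * ⟪f, x⟫_ℂ := by
    rw [hg, coemb_inner, ← hg, ← h1, inner_sub_right, inner_smul_right]
    have : ⟪f, U x⟫_ℂ = ⟪f, x⟫_ℂ := by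
      nth_rw 1 [← hf]
      exact U.inner_map_map f x
    rw [this]; ring
  have h3 : ‖w‖ ≤ ‖g‖ := by
    rw [hw, norm_smul]
    nlinarith [norm_transfer_le ι U hz g, norm_nonneg z, norm_nonneg g,
      norm_nonneg (transfer ι U z g)]
  have h4 : ‖g - w‖ ^ 2 = ‖g‖ ^ 2 - 2 * RCLike.re ⟪g, w⟫_ℂ + ‖w‖ ^ 2 := norm_sub_sq g w
  have h5 : RCLike.re ⟪g, g - w⟫_ℂ = ‖g‖ ^ 2 - RCLike.re ⟪g, w⟫_ℂ := by
    rw [inner_sub_right, map_sub, inner_self_eq_norm_sq]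
  have h6 : RCLike.re ⟪g, g - w⟫_ℂ ≤ ‖1 - z‖ * ‖f‖ * ‖x‖ := by
    refine (RCLike.re_le_norm _).trans ?_
    rw [h2, norm_mul, mul_assoc]
    gcongr
    exact norm_inner_le_norm f x
  have h7 : ‖w‖ ^ 2 ≤ ‖g‖ ^ 2 := by gcongr
  linarith

/-! ### Approach to the point at infinity in sectors -/

/-- The Cayley parametrization `λ ↦ (λ - i)/(λ + i)` of the disc by the upper half-plane. -/
def zet (l : ℂ) : ℂ := (l - Complex.I) / (l + Complex.I)

lemma norm_add_I_sq (l : ℂ) : ‖l + Complex.I‖ ^ 2 = ‖l‖ ^ 2 + 2 * l.im + 1 := by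
  rw [Complex.sq_norm, Complex.sq_norm, Complex.normSq_apply, Complex.normSq_apply]
  simp; ring

lemma norm_sub_I_sq (l : ℂ) : ‖l - Complex.I‖ ^ 2 = ‖l‖ ^ 2 - 2 * l.im + 1 := by
  rw [Complex.sq_norm, Complex.sq_norm, Complex.normSq_apply, Complex.normSq_apply]
  simp; ring

lemma norm_add_I_pos {l : ℂ} (hl : 0 < l.im) : 0 < ‖l + Complex.I‖ := by
  rw [norm_pos_iff]
  intro h
  have := congrArg Complex.im h
  simp at this
  linarith

lemma one_sub_norm_zet_sq {l : ℂ} (hl : 0 < l.im) :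
    1 - ‖zet l‖ ^ 2 = 4 * l.im / ‖l + Complex.I‖ ^ 2 := by
  have h0 := norm_add_I_pos hl
  rw [zet, norm_div, div_pow, eq_div_iff (by positivity), sub_mul,
    div_mul_cancel₀ _ (by positivity), norm_add_I_sq, norm_sub_I_sq]
  ring

lemma norm_one_sub_zet {l : ℂ} (hl : 0 < l.im) : ‖1 - zet l‖ = 2 / ‖l + Complex.I‖ := by
  have h0 := norm_add_I_pos hl
  have h1 : l + Complex.I ≠ 0 := norm_pos_iff.1 h0
  have : 1 - zet l = 2 * Complex.I / (l + Complex.I) := by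
    rw [zet]; field_simp; ring
  rw [this, norm_div]; simp

lemma norm_zet_lt {l : ℂ} (hl : 0 < l.im) : ‖zet l‖ < 1 := by
  have h0 := norm_add_I_pos hl
  have h1 := one_sub_norm_zet_sq hl
  have h2 : 0 < 4 * l.im / ‖l + Complex.I‖ ^ 2 := by positivity
  nlinarith [norm_nonneg (zet l)]

lemma sector_eventually {ε : ℝ} (h0 : 0 < ε) (r : ℝ) :
    ∀ᶠ l in sectorFilter ε, r ≤ ‖l‖ ∧ ‖l‖ * Real.sin ε ≤ l.im := by
  have e1 : ∀ᶠ l in sectorFilter ε, r ≤ ‖l‖ :=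
    Filter.Eventually.filter_mono inf_le_left
      (Filter.tendsto_comap.eventually (Filter.eventually_ge_atTop r))
  have e2 : ∀ᶠ l in sectorFilter ε, ε < l.arg ∧ l.arg < Real.pi - ε :=
    Filter.Eventually.filter_mono inf_le_right (Filter.eventually_principal.2 fun l hl => hl)
  filter_upwards [e1, e2] with l h2 h3
  refine ⟨h2, ?_⟩
  rw [← Complex.norm_mul_sin_arg l]
  gcongr
  rcases le_total l.arg (Real.pi / 2) with h | h
  · exact Real.sin_le_sin_of_le_of_le_pi_div_two (by linarith) h h3.1.le
  · rw [← Real.sin_pi_sub l.arg]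
    exact Real.sin_le_sin_of_le_of_le_pi_div_two (by linarith) (by linarith) (by linarith [h3.2])

lemma sector_neBot {ε : ℝ} (h1 : ε < Real.pi / 2) : (sectorFilter ε).NeBot := by
  -- the points `t i`, `t > 0`, lie in the sector
  have ht : Filter.Tendsto (fun t : ℝ => (t : ℂ) * Complex.I) Filter.atTop (sectorFilter ε) := by
    refine Filter.tendsto_inf.2 ⟨Filter.tendsto_comap_iff.2 ?_, Filter.tendsto_principal.2 ?_⟩
    · refine Filter.tendsto_abs_atTop_atTop.congr fun t => ?_
      simp
    · filter_upwards [Filter.eventually_gt_atTop 0] with t htpos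
      rw [Complex.arg_real_mul _ htpos, Complex.arg_I]
      constructor <;> linarith
  exact ht.neBot

lemma zet_tendsto {ε : ℝ} (h0 : 0 < ε) (h1 : ε < Real.pi / 2) :
    Filter.Tendsto (fun l => ‖1 - zet l‖) (sectorFilter ε) (nhds 0) := by
  rw [Metric.tendsto_nhds]
  intro δ hδ
  have hs : 0 < Real.sin ε := Real.sin_pos_of_pos_of_lt_pi h0 (by linarith [Real.pi_pos])
  filter_upwards [sector_eventually h0 (max 1 (4 / δ))] with l hl
  have hr : 1 ≤ ‖l‖ := (le_max_left _ _).trans hl.1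
  have hd : 4 / δ ≤ ‖l‖ := (le_max_right _ _).trans hl.1
  have him : 0 < l.im := lt_of_lt_of_le (by positivity) hl.2
  rw [norm_one_sub_zet him, Real.dist_eq, sub_zero, abs_of_nonneg (by positivity)]
  have h2 : ‖l‖ ≤ ‖l + Complex.I‖ := by
    apply abs_le_of_sq_le_sq' _ (norm_nonneg _) |>.2
    rw [norm_add_I_sq]; linarith
  rw [div_lt_iff₀ (norm_add_I_pos him)]
  rw [div_le_iff₀ hδ] at hd
  nlinarith

/-- In the sector the factor `|λ|(1 - |z|²)`, `z = (λ - i)/(λ + i)`, is bounded above and below,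
and `|1 - z|/(1 - |z|²)` is bounded. -/
lemma sector_bounds {l : ℂ} {s : ℝ} (hs : 0 < s) (hl : 1 ≤ ‖l‖) (him : ‖l‖ * s ≤ l.im) :
    0 < l.im ∧ ‖l‖ * (1 - ‖zet l‖ ^ 2) ≤ 4 ∧ s ≤ ‖l‖ * (1 - ‖zet l‖ ^ 2) ∧
      ‖1 - zet l‖ * s ≤ 1 - ‖zet l‖ ^ 2 := by
  have hi : 0 < l.im := lt_of_lt_of_le (by positivity) him
  have ha := norm_add_I_pos hi
  have ha2 := norm_add_I_sq l
  have hle : l.im ≤ ‖l‖ := (le_abs_self _).trans (Complex.abs_im_le_norm l)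
  have h2 : ‖l + Complex.I‖ ≤ 2 * ‖l‖ := by
    refine (norm_add_le _ _).trans ?_
    rw [Complex.norm_I]; linarith
  rw [one_sub_norm_zet_sq hi, norm_one_sub_zet hi]
  set a := ‖l + Complex.I‖
  refine ⟨hi, ?_, ?_, ?_⟩
  · rw [← mul_div_assoc, div_le_iff₀ (by positivity)]
    nlinarith
  · rw [← mul_div_assoc, le_div_iff₀ (by positivity)]
    nlinarith [mul_le_mul h2 h2 ha.le (by positivity), mul_le_mul_of_nonneg_left him (norm_nonneg l)]
  · rw [le_div_iff₀ (by positivity)]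
    have : 2 / a * s * a ^ 2 = 2 * s * a := by field_simp
    rw [this]
    nlinarith

/-! ### Boundary behaviour of the transfer function -/

/-- If `g` is the compression of a fixed vector of `U`, then in every sector `T g → g` with
defect `O(1/|λ|)`. -/
lemma fixed_sector (ι : H →ₗᵢ[ℂ] K) (U : K ≃ₗᵢ[ℂ] K) {f : K} (hf : U f = f) {ε : ℝ}
    (h0 : 0 < ε) (h1 : ε < Real.pi / 2) :
    Filter.Tendsto (fun l => transfer ι U (zet l) (coemb ι f)) (sectorFilter ε)
      (nhds (coemb ι f)) ∧
    ∃ C : ℝ, ∀ᶠ l in sectorFilter ε,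
      ‖l‖ * (‖coemb ι f‖ ^ 2 - ‖transfer ι U (zet l) (coemb ι f)‖ ^ 2) ≤ C := by
  set g := coemb ι f with hg
  have hs : 0 < Real.sin ε := Real.sin_pos_of_pos_of_lt_pi h0 (by linarith [Real.pi_pos])
  set B : ℝ := ‖f‖ + 2 * ‖f‖ / Real.sin ε with hB
  have hB0 : 0 ≤ B := by positivity
  have hst : ∀ᶠ l in sectorFilter ε, ‖stateMap ι U (zet l) g‖ ≤ B := by
    filter_upwards [sector_eventually h0 1] with l hl
    obtain ⟨hi, -, -, hb⟩ := sector_bounds hs hl.1 hl.2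
    have hz := norm_zet_lt hi
    have hd := fixed_sub_state ι U hz hf
    have h2 : ‖f - stateMap ι U (zet l) g‖ ≤ 2 * ‖f‖ / Real.sin ε := by
      rw [le_div_iff₀ hs]
      set D := ‖f - stateMap ι U (zet l) g‖
      have hD : 0 ≤ D := norm_nonneg _
      -- multiply the defect estimate by `1 + |z| ≤ 2` and divide by `|1 - z|`
      have hpos : 0 < ‖1 - zet l‖ := by
        rw [norm_one_sub_zet hi]; exact div_pos two_pos (norm_add_I_pos hi)
      have e1 : ‖1 - zet l‖ * Real.sin ε * D ≤ (1 - ‖zet l‖ ^ 2) * D := by gcongr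
      have e2 : (1 - ‖zet l‖ ^ 2) * D ≤ 2 * (‖1 - zet l‖ * ‖f‖) := by
        have : 0 ≤ (1 - ‖zet l‖) * D := mul_nonneg (by linarith) hD
        nlinarith [norm_nonneg (zet l)]
      refine le_of_mul_le_mul_left ?_ hpos
      nlinarith
    calc ‖stateMap ι U (zet l) g‖ = ‖f - (f - stateMap ι U (zet l) g)‖ := by rw [sub_sub_cancel]
      _ ≤ ‖f‖ + ‖f - stateMap ι U (zet l) g‖ := norm_sub_le _ _
      _ ≤ B := by rw [hB]; linarith
  constructor
  · rw [tendsto_iff_norm_sub_tendsto_zero]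
    have hlim : Filter.Tendsto (fun l => √(2 * (‖1 - zet l‖ * ‖f‖ * B)) + ‖1 - zet l‖ * ‖g‖)
        (sectorFilter ε) (nhds 0) := by
      have hc : Continuous (fun t : ℝ => √(2 * (t * ‖f‖ * B)) + t * ‖g‖) := by fun_prop
      have := (hc.tendsto 0).comp (zet_tendsto h0 h1)
      rw [zero_mul, zero_mul, zero_mul, mul_zero, Real.sqrt_zero, add_zero] at this
      exact this
    refine squeeze_zero' (Filter.Eventually.of_forall fun l => norm_nonneg _) ?_ hlim
    filter_upwards [hst, sector_eventually h0 1] with l hl hl2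
    obtain ⟨hi, -, -, -⟩ := sector_bounds hs hl2.1 hl2.2
    have hz := norm_zet_lt hi
    have e1 : ‖g - zet l • transfer ι U (zet l) g‖ ≤ √(2 * (‖1 - zet l‖ * ‖f‖ * B)) := by
      apply Real.le_sqrt_of_sq_le
      refine (fixed_transfer_sq ι U hz hf).trans ?_
      gcongr
    have e2 : transfer ι U (zet l) g - g =
        (1 - zet l) • transfer ι U (zet l) g - (g - zet l • transfer ι U (zet l) g) := by
      rw [sub_smul, one_smul]; abel
    rw [e2]
    refine (norm_sub_le _ _).trans ?_
    rw [norm_smul, add_comm]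
    gcongr
    exact norm_transfer_le ι U hz g
  · refine ⟨4 * B ^ 2, ?_⟩
    filter_upwards [hst, sector_eventually h0 1] with l hl hl2
    obtain ⟨hi, h4, -, -⟩ := sector_bounds hs hl2.1 hl2.2
    have hz := norm_zet_lt hi
    rw [transfer_defect ι U hz, ← mul_assoc]
    have : ‖coproj ι (U (stateMap ι U (zet l) g))‖ ≤ B :=
      ((norm_coproj_le ι _).trans (U.norm_map _).le).trans hl
    gcongr

/-- Converse to `fixed_sector`: if `T g → g` in a sector with defect `O(1/|λ|)` along a
subfamily, the corresponding states are bounded and asymptotically fixed by `U`, while their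
compression is constantly `g`; hence `g = 0` if `ker (1 - U) ⊥ ι H`. -/
lemma eq_zero_of_sector (ι : H →ₗᵢ[ℂ] K) (U : K ≃ₗᵢ[ℂ] K)
    (hfix : ∀ f : K, U f = f → coemb ι f = 0) {ε : ℝ}
    (h0 : 0 < ε) (h1 : ε < Real.pi / 2) (g : H)
    (hT : Filter.Tendsto (fun l => transfer ι U (zet l) g) (sectorFilter ε) (nhds g))
    (hC : ∃ C : ℝ, ∃ᶠ l in sectorFilter ε,
      ‖l‖ * (‖g‖ ^ 2 - ‖transfer ι U (zet l) g‖ ^ 2) ≤ C) : g = 0 := by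
  obtain ⟨C, hC⟩ := hC
  have hs : 0 < Real.sin ε := Real.sin_pos_of_pos_of_lt_pi h0 (by linarith [Real.pi_pos])
  set B : ℝ := √(‖g‖ ^ 2 + C / Real.sin ε) with hB
  have hB0 : 0 ≤ B := Real.sqrt_nonneg _
  have hst : ∃ᶠ l in sectorFilter ε, ‖stateMap ι U (zet l) g‖ ≤ B := by
    refine (hC.and_eventually (sector_eventually h0 1)).mono ?_
    rintro l ⟨hl, hl2⟩
    obtain ⟨hi, -, hb, -⟩ := sector_bounds hs hl2.1 hl2.2
    have hz := norm_zet_lt hi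
    rw [transfer_defect ι U hz, ← mul_assoc] at hl
    apply Real.le_sqrt_of_sq_le
    rw [norm_state_sq ι U hz]
    set q := ‖coproj ι (U (stateMap ι U (zet l) g))‖ ^ 2
    have hq : 0 ≤ q := sq_nonneg _
    have e1 : q ≤ C / Real.sin ε := by
      rw [le_div_iff₀ hs]
      nlinarith
    have e2 : ‖zet l‖ ^ 2 ≤ 1 := pow_le_one₀ (norm_nonneg _) hz.le
    nlinarith
  have hlim : Filter.Tendsto
      (fun l => ‖g - zet l • transfer ι U (zet l) g‖ + ‖1 - zet l‖ * B)
      (sectorFilter ε) (nhds 0) := by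
    have hz0 := zet_tendsto h0 h1
    have hz1 : Filter.Tendsto zet (sectorFilter ε) (nhds 1) := by
      rw [tendsto_iff_norm_sub_tendsto_zero]
      exact hz0.congr fun l => norm_sub_rev _ _
    have e1 := ((tendsto_const_nhds (x := g)).sub (hz1.smul hT)).norm
    have e2 := e1.add (hz0.mul_const B)
    simpa using e2
  set S : K →L[ℂ] K := 1 - uCLM U with hS
  have hmem : ι g ∈ (LinearMap.ker (S : K →ₗ[ℂ] K))ᗮ := by
    rw [Submodule.mem_orthogonal]
    intro f hf
    have hf' : U f = f := (sub_eq_zero.1 (LinearMap.mem_ker.1 hf)).symm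
    rw [← coemb_inner, hfix f hf', inner_zero_left]
  -- `ι g` is a limit of vectors `(1 - U)* w`, which are asymptotically orthogonal to the states
  rw [ContinuousLinearMap.orthogonal_ker] at hmem
  have hcl := Metric.mem_closure_iff.1 hmem
  have key : ∀ δ > 0, ‖g‖ ^ 2 ≤ δ * B + δ := by
    intro δ hδ
    obtain ⟨_, ⟨w, rfl⟩, hw⟩ := hcl δ hδ
    have hsmall : ∀ᶠ l in sectorFilter ε,
        ‖w‖ * (‖g - zet l • transfer ι U (zet l) g‖ + ‖1 - zet l‖ * B) < δ := by
      have := hlim.const_mul ‖w‖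
      rw [mul_zero] at this
      exact this.eventually (gt_mem_nhds hδ)
    obtain ⟨l, hlB, hl1, hl2⟩ :=
      (hst.and_eventually (hsmall.and (sector_eventually h0 1))).exists
    obtain ⟨hi, -, -, -⟩ := sector_bounds hs hl2.1 hl2.2
    have hz := norm_zet_lt hi
    set x := stateMap ι U (zet l) g with hx
    have e1 : ⟪ι g, x⟫_ℂ = (‖g‖ : ℂ) ^ 2 := by
      rw [← inner_coemb, coemb_state ι U hz]
      exact inner_self_eq_norm_sq_to_K g
    have e2 : S x = ι (g - zet l • transfer ι U (zet l) g) - (1 - zet l) • U x := by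
      rw [← state_sub ι U hz, ← hx, sub_smul, one_smul]
      change x - U x = _
      abel
    have e3 : ⟪ι g, x⟫_ℂ =
        ⟪ι g - ContinuousLinearMap.adjoint S w, x⟫_ℂ + ⟪w, S x⟫_ℂ := by
      rw [inner_sub_left, ContinuousLinearMap.adjoint_inner_left]; ring
    have e4 : ‖S x‖ ≤ ‖g - zet l • transfer ι U (zet l) g‖ + ‖1 - zet l‖ * B := by
      rw [e2]
      refine (norm_sub_le _ _).trans ?_
      rw [ι.norm_map, norm_smul, U.norm_map]
      gcongr
    have e5 : ‖ι g - ContinuousLinearMap.adjoint S w‖ ≤ δ := by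
      rw [← dist_eq_norm]; exact hw.le
    calc ‖g‖ ^ 2 = ‖⟪ι g, x⟫_ℂ‖ := by rw [e1]; simp
      _ ≤ ‖ι g - ContinuousLinearMap.adjoint S w‖ * ‖x‖ + ‖w‖ * ‖S x‖ := by
        rw [e3]
        refine (norm_add_le _ _).trans ?_
        gcongr <;> exact norm_inner_le_norm _ _
      _ ≤ δ * B + ‖w‖ * (‖g - zet l • transfer ι U (zet l) g‖ + ‖1 - zet l‖ * B) := by gcongr
      _ ≤ δ * B + δ := by linarith
  have h2 : ‖g‖ ^ 2 ≤ 0 := by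
    refine le_of_forall_pos_le_add fun η hη => ?_
    have := key (η / (B + 1)) (by positivity)
    have e : η / (B + 1) * B + η / (B + 1) = η := by field_simp
    linarith
  have : ‖g‖ = 0 := by nlinarith [norm_nonneg g]
  exact norm_eq_zero.1 this

/-! ### Admissibility of the parameter and fixed vectors -/

lemma norm_sq_dom_add (V : ClosedIsometry H) (v : V.dom) (n : V.N0) :
    ‖(v : H) + n‖ ^ 2 = ‖(v : H)‖ ^ 2 + ‖(n : H)‖ ^ 2 := by
  have h0 : ⟪(v : H), (n : H)⟫_ℂ = 0 := (Submodule.mem_orthogonal _ _).1 n.2 _ v.2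
  have := norm_add_sq_eq_norm_sq_add_norm_sq_of_inner_eq_zero _ _ h0
  rw [sq, this]; ring

lemma norm_sq_range_add (V : ClosedIsometry H) (v : V.dom) {y : H} (hy : y ∈ V.Ninf) :
    ‖V.map v + y‖ ^ 2 = ‖(v : H)‖ ^ 2 + ‖y‖ ^ 2 := by
  have h0 : ⟪V.map v, y⟫_ℂ = 0 := (Submodule.mem_orthogonal _ _).1 hy _ ⟨v, rfl⟩
  have := norm_add_sq_eq_norm_sq_add_norm_sq_of_inner_eq_zero _ _ h0
  rw [sq, this, V.map.norm_map, Submodule.coe_norm]; ring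

lemma cayley_noFixed {V : ClosedIsometry H} {A : H →ₗ.[ℂ] H} (hV : IsCayleyOf V A) :
    V.NoFixed := by
  intro v hv
  obtain ⟨x, h1, h2⟩ := (hV v (V.map v)).1 ⟨v.2, rfl⟩
  rw [hv] at h2
  have h3 : (2 * Complex.I) • (x : H) = 0 := by
    have := h2.trans h1.symm
    rw [mul_smul, two_smul]
    have h4 := sub_eq_zero.2 this
    rw [← h4]; abel
  have h5 : x = 0 := by
    have := (smul_eq_zero.1 h3).resolve_left (by simp)
    exact Subtype.ext this
  rw [← h1, h5]; simp

/-- The domain of `A` is the range of `V - E`. -/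
lemma cayley_mem_domain {V : ClosedIsometry H} {A : H →ₗ.[ℂ] H} (hV : IsCayleyOf V A) (y : H) :
    y ∈ A.domain ↔ ∃ v : V.dom, V.map v - v = y := by
  constructor
  · intro hy
    obtain ⟨hu, hw⟩ := (hV _ _).2 ⟨⟨y, hy⟩, rfl, rfl⟩
    refine ⟨(2 * Complex.I)⁻¹ • ⟨_, hu⟩, ?_⟩
    rw [map_smul, hw, Submodule.coe_smul, ← smul_sub]
    have : A ⟨y, hy⟩ + Complex.I • y - (A ⟨y, hy⟩ - Complex.I • y) = (2 * Complex.I) • y := by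
      rw [mul_smul, two_smul]; abel
    rw [this, inv_smul_smul₀ (by simp)]
  · rintro ⟨v, rfl⟩
    obtain ⟨x, h1, h2⟩ := (hV v (V.map v)).1 ⟨v.2, rfl⟩
    have : V.map v - v = (2 * Complex.I) • (x : H) := by
      rw [← h1, ← h2, mul_smul, two_smul]; abel
    rw [this]
    exact A.domain.smul_mem _ x.2

/-- A single unitary extension `U` of `V`: its parameter is admissible if and only if the fixed
vectors of `U` are orthogonal to `H`. -/
lemma admissible_iff (ι : H →ₗᵢ[ℂ] K) (U : K ≃ₗᵢ[ℂ] K) {V : ClosedIsometry H}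
    {A : H →ₗ.[ℂ] H} (hV : IsCayleyOf V A) (hU : ExtendsIso ι V U)
    (Φ : ℂ → (↥V.N0 →L[ℂ] H))
    (hΦ : ∀ z ∈ ball (0 : ℂ) 1, z ≠ 0 → ∀ n : ↥V.N0, Φ z n = transfer ι U z n) :
    AdmissibleFor A V (fun l => Φ ((l - Complex.I) / (l + Complex.I))) ↔
      ∀ f : K, U f = f → coemb ι f = 0 := by
  have hev : ∀ {ε : ℝ}, 0 < ε → ε < Real.pi / 2 → ∀ᶠ l in sectorFilter ε, ‖zet l‖ < 1 ∧
      ∀ n : V.N0, Φ ((l - Complex.I) / (l + Complex.I)) n = transfer ι U (zet l) n := by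
    intro ε h0 h1
    have hs : 0 < Real.sin ε := Real.sin_pos_of_pos_of_lt_pi h0 (by linarith [Real.pi_pos])
    filter_upwards [sector_eventually h0 2] with l hl
    obtain ⟨hi, -⟩ := sector_bounds hs (by linarith) hl.2
    have hz := norm_zet_lt hi
    refine ⟨hz, hΦ _ (mem_ball_zero_iff.2 hz) ?_⟩
    refine div_ne_zero (fun h => ?_) (norm_pos_iff.1 (norm_add_I_pos hi))
    rw [sub_eq_zero] at h
    rw [h, Complex.norm_I] at hl
    linarith [hl.1]
  have hsplit : ∀ {z : ℂ}, ‖z‖ < 1 → ∀ (v : V.dom) (n : V.N0),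
      transfer ι U z ((v : H) + n) = V.map v + transfer ι U z n := fun hz v n => by
    rw [map_add, transfer_dom ι U hU hz]
  have hdef : ∀ {z : ℂ}, ‖z‖ < 1 → ∀ (v : V.dom) (n : V.N0),
      ‖(v : H) + n‖ ^ 2 - ‖transfer ι U z ((v : H) + n)‖ ^ 2 =
        ‖(n : H)‖ ^ 2 - ‖transfer ι U z n‖ ^ 2 := fun hz v n => by
    rw [hsplit hz, norm_sq_dom_add, norm_sq_range_add V v (transfer_N0 ι U hU hz n)]; ring
  constructor
  · intro hadm f hf
    set g := coemb ι f with hg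
    -- `g = v + ψ = V v + φ` are the decompositions of `g` along `D(V)` and `R(V)`
    obtain ⟨v₀, hv, ψ₀, hψ, hgv⟩ := V.dom.exists_add_mem_mem_orthogonal g
    set v : V.dom := ⟨v₀, hv⟩ with hvdef
    set ψ : V.N0 := ⟨ψ₀, hψ⟩ with hψdef
    have hgv' : g = (v : H) + ψ := hgv
    set φ : H := g - V.map v with hφ
    have hφN : φ ∈ V.Ninf := by
      rw [ClosedIsometry.Ninf, Submodule.mem_orthogonal]
      rintro _ ⟨w, rfl⟩
      change ⟪V.map w, g - V.map v⟫_ℂ = 0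
      have e1 : ⟪V.map w, g⟫_ℂ = ⟪(w : H), g⟫_ℂ := by
        rw [hg, inner_coemb, inner_coemb, ← hU w]
        nth_rw 1 [← hf]
        rw [U.inner_map_map]
      rw [inner_sub_right, e1, V.map.inner_map_map, Submodule.coe_inner, ← inner_sub_right, hgv',
        add_sub_cancel_left]
      exact (Submodule.mem_orthogonal _ _).1 ψ.2 _ w.2
    have hgφ : g = V.map v + φ := by rw [hφ]; abel
    have hψ0 : (ψ : H) = 0 := by
      by_contra hne
      have hpos : 0 < ‖(ψ : H)‖ := norm_pos_iff.2 hne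
      refine hne (hadm ψ φ hφN ?_ ⟨Real.pi / 4, by positivity, by linarith [Real.pi_pos], ?_, ?_⟩)
      · rw [cayley_mem_domain hV]
        exact ⟨v, by rw [hφ, hgv']; abel⟩
      all_goals
        have h0 : 0 < Real.pi / 4 := by positivity
        have h1 : Real.pi / 4 < Real.pi / 2 := by linarith [Real.pi_pos]
        obtain ⟨ht, C, hC⟩ := fixed_sector ι U hf h0 h1
      · refine ((ht.sub_const (V.map v))).congr' ?_
        filter_upwards [hev h0 h1] with l hl
        rw [hl.2, ← hg, hgv', hsplit hl.1, add_sub_cancel_left]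
      · have := sector_neBot h1
        refine ⟨C / ‖(ψ : H)‖, Filter.Eventually.frequently ?_⟩
        filter_upwards [hev h0 h1, hC] with l hl hl2
        rw [← hg, hgv', hdef hl.1] at hl2
        rw [hl.2, le_div_iff₀ hpos, mul_assoc]
        refine le_trans ?_ hl2
        have := norm_transfer_le ι U hl.1 (ψ : H)
        gcongr
        nlinarith [norm_nonneg (transfer ι U (zet l) (ψ : H))]
    have hgv2 : g = v := by rw [hgv', hψ0, add_zero]
    have hφ0 : φ = 0 := by
      have e1 := norm_sq_range_add V v hφN
      rw [← hgφ, hgv2] at e1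
      have : ‖φ‖ = 0 := by nlinarith [norm_nonneg φ]
      exact norm_eq_zero.1 this
    rw [hgv2]
    apply cayley_noFixed hV v
    rw [← hgv2]
    exact (sub_eq_zero.1 hφ0).symm
  · rintro hfix ψ φ hφ hdom ⟨ε, h0, h1, ht, C, hC⟩
    obtain ⟨v, hv⟩ := (cayley_mem_domain hV _).1 hdom
    have hg : (v : H) + ψ = V.map v + φ := by
      rw [sub_eq_sub_iff_add_eq_add] at hv
      rw [hv, add_comm]
    have hzero : (v : H) + ψ = 0 := by
      refine eq_zero_of_sector ι U hfix h0 h1 _ ?_ ⟨C * (2 * ‖(ψ : H)‖), ?_⟩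
      · nth_rw 2 [hg]
        refine (ht.const_add (V.map v)).congr' ?_
        filter_upwards [hev h0 h1] with l hl
        rw [hl.2, hsplit hl.1]
      · refine (hC.and_eventually (hev h0 h1)).mono ?_
        rintro l ⟨hl, hl1, hl2⟩
        rw [hl2] at hl
        rw [hdef hl1]
        have ht := norm_transfer_le ι U hl1 (ψ : H)
        have hd : 0 ≤ ‖l‖ * (‖(ψ : H)‖ - ‖transfer ι U (zet l) (ψ : H)‖) :=
          mul_nonneg (norm_nonneg _) (by linarith)
        rw [sq_sub_sq, mul_comm (_ + _), ← mul_assoc]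
        have h2 : ‖(ψ : H)‖ + ‖transfer ι U (zet l) (ψ : H)‖ ≤ 2 * ‖(ψ : H)‖ := by linarith
        exact mul_le_mul hl h2 (by positivity) (hd.trans hl)
    have e1 := norm_sq_dom_add V v ψ
    rw [hzero, norm_zero] at e1
    have : ‖(ψ : H)‖ = 0 := by nlinarith [norm_nonneg (ψ : H), sq_nonneg ‖(v : H)‖]
    exact norm_eq_zero.1 this

/-! ### Removing the fixed vectors -/

lemma isUnit_one_sub_uCLM (U : K ≃ₗᵢ[ℂ] K) {z : ℂ} (hz : ‖z‖ ≠ 1) :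
    IsUnit (1 - z • uCLM U) := by
  rcases lt_or_gt_of_ne hz with h | h
  · apply isUnit_one_sub_of_norm_lt_one
    have : ‖uCLM U‖ ≤ 1 := U.toLinearIsometry.norm_toContinuousLinearMap_le
    rw [norm_smul]
    nlinarith [norm_nonneg z]
  · -- `1 - zU = -zU (1 - z⁻¹ U⁻¹)`
    have hz0 : z ≠ 0 := fun h0 => by rw [h0, norm_zero] at h; linarith
    have hl : uCLM U.symm * uCLM U = 1 := by ext x; exact U.symm_apply_apply x
    have hr : uCLM U * uCLM U.symm = 1 := by ext x; exact U.apply_symm_apply x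
    have h1 : IsUnit (1 - z⁻¹ • uCLM U.symm) := by
      apply isUnit_one_sub_of_norm_lt_one
      have : ‖uCLM U.symm‖ ≤ 1 := U.symm.toLinearIsometry.norm_toContinuousLinearMap_le
      have hzi : ‖z⁻¹‖ < 1 := by rw [norm_inv]; exact inv_lt_one_of_one_lt₀ h
      rw [norm_smul]
      nlinarith [norm_nonneg z⁻¹]
    have h2 : IsUnit (uCLM U) := ⟨⟨uCLM U, uCLM U.symm, hr, hl⟩, rfl⟩
    have h3 : IsUnit ((-z) • uCLM U) := (Units.mk0 (-z) (neg_ne_zero.2 hz0) • h2.unit).isUnit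
    have h4 : 1 - z • uCLM U = ((-z) • uCLM U) * (1 - z⁻¹ • uCLM U.symm) := by
      rw [mul_sub, mul_one, smul_mul_smul_comm, hr, neg_mul, mul_inv_cancel₀ hz0, neg_smul,
        neg_smul, one_smul]
      abel
    rw [h4]
    exact h3.mul h1

@[simp] lemma moebius_zero (W : K →L[ℂ] K) : moebius 0 W = 1 := by
  simp [moebius]

/-- `(E + zU)(E - zU)⁻¹` is compatible with isometric intertwiners. -/
lemma moebius_intertwine {M : Type*} [NormedAddCommGroup M] [InnerProductSpace ℂ M]
    [CompleteSpace M] (J : M →ₗᵢ[ℂ] K) (W : M ≃ₗᵢ[ℂ] M) (U : K ≃ₗᵢ[ℂ] K)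
    (hJ : ∀ x, J (W x) = U (J x)) {z : ℂ} (hz : ‖z‖ ≠ 1) (x : M) :
    J (moebius z (uCLM W) x) = moebius z (uCLM U) (J x) := by
  set y := Ring.inverse (1 - z • uCLM W) x with hy
  have h1 : y - z • W y = x :=
    congrArg (fun F : M →L[ℂ] M => F x) (Ring.mul_inverse_cancel _ (isUnit_one_sub_uCLM W hz))
  have h2 : Ring.inverse (1 - z • uCLM U) (J x) = J y := by
    have h3 := congrArg (fun F : K →L[ℂ] K => F (J y))
      (Ring.inverse_mul_cancel _ (isUnit_one_sub_uCLM U hz))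
    have h4 : (1 - z • uCLM U) (J y) = J x := by
      change J y - z • U (J y) = J x
      rw [← hJ, ← h1, map_sub, map_smul]
    rw [← h4]
    exact h3
  change J (y + z • W y) = Ring.inverse (1 - z • uCLM U) (J x) +
    z • U (Ring.inverse (1 - z • uCLM U) (J x))
  rw [h2, map_add, map_smul, hJ]

/-- The fixed space of a unitary operator. -/
def fixSpace (U : K ≃ₗᵢ[ℂ] K) : Submodule ℂ K where
  carrier := {x | U x = x}
  zero_mem' := map_zero U
  add_mem' := fun {a b} ha hb => by
    change U (a + b) = a + b
    rw [map_add, show U a = a from ha, show U b = b from hb]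
  smul_mem' := fun c a ha => by
    change U (c • a) = c • a
    rw [map_smul, show U a = a from ha]

lemma fixSpace_orthogonal_map (U W : K ≃ₗᵢ[ℂ] K) (hc : ∀ x, U (W x) = W (U x)) {x : K}
    (hx : x ∈ (fixSpace U)ᗮ) : W x ∈ (fixSpace U)ᗮ := by
  rw [Submodule.mem_orthogonal] at hx ⊢
  intro f hf
  have hf' : U f = f := hf
  have h1 : W.symm f ∈ fixSpace U := by
    change U (W.symm f) = W.symm f
    apply W.injective
    rw [← hc, W.apply_symm_apply, hf']
  have h2 := hx _ h1
  rwa [← W.inner_map_map, W.apply_symm_apply] at h2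

/-- The restriction of a unitary operator to a reducing subspace. -/
def restrictU (U : K ≃ₗᵢ[ℂ] K) (M : Submodule ℂ K) (h1 : ∀ x ∈ M, U x ∈ M)
    (h2 : ∀ x ∈ M, U.symm x ∈ M) : M ≃ₗᵢ[ℂ] M where
  toFun x := ⟨U x, h1 x x.2⟩
  invFun x := ⟨U.symm x, h2 x x.2⟩
  left_inv x := Subtype.ext (U.symm_apply_apply x)
  right_inv x := Subtype.ext (U.apply_symm_apply x)
  map_add' _ _ := Subtype.ext (map_add U _ _)
  map_smul' c _ := Subtype.ext (map_smul U c _)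
  norm_map' x := U.norm_map x

end Transfer

/-- Commuting unitary extensions can be cut down to the orthogonal complement of their fixed
vectors when that complement contains `H`; the compressions to `H` do not change. -/
lemma exists_noFixed {H : Type} [NormedAddCommGroup H] [InnerProductSpace ℂ H] [CompleteSpace H]
    (V₁ V₂ : ClosedIsometry H) (Ru : ℂ → ℂ → (H →L[ℂ] H)) (e : HilbertExt H)
    (U₁ U₂ : e.car ≃ₗᵢ[ℂ] e.car) (hU₁ : ExtendsIso e.emb V₁ U₁) (hU₂ : ExtendsIso e.emb V₂ U₂)
    (hc : ∀ x : e.car, U₁ (U₂ x) = U₂ (U₁ x))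
    (hR : ∀ (z₁ z₂ : ℂ), ‖z₁‖ ≠ 1 → ‖z₂‖ ≠ 1 → ∀ x y : H,
      ⟪y, Ru z₁ z₂ x⟫_ℂ =
        ⟪e.emb y, (moebius z₁ (uCLM U₁) * moebius z₂ (uCLM U₂)) (e.emb x)⟫_ℂ)
    (hf₁ : ∀ f : e.car, U₁ f = f → coemb e.emb f = 0)
    (hf₂ : ∀ f : e.car, U₂ f = f → coemb e.emb f = 0) :
    ∃ (e : HilbertExt H) (U₁ U₂ : e.car ≃ₗᵢ[ℂ] e.car),
      ExtendsIso e.emb V₁ U₁ ∧ ExtendsIso e.emb V₂ U₂ ∧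
      (∀ x : e.car, U₁ (U₂ x) = U₂ (U₁ x)) ∧
      (∀ x : e.car, U₁ x = x → x = 0) ∧ (∀ x : e.car, U₂ x = x → x = 0) ∧
      ∀ (z₁ z₂ : ℂ), ‖z₁‖ ≠ 1 → ‖z₂‖ ≠ 1 → ∀ x y : H,
        ⟪y, Ru z₁ z₂ x⟫_ℂ =
          ⟪e.emb y, (moebius z₁ (uCLM U₁) * moebius z₂ (uCLM U₂)) (e.emb x)⟫_ℂ := by
  set M : Submodule ℂ e.car := (fixSpace U₁)ᗮ ⊓ (fixSpace U₂)ᗮ with hM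
  have hMc : IsClosed (M : Set e.car) :=
    (Submodule.isClosed_orthogonal _).inter (Submodule.isClosed_orthogonal _)
  have : CompleteSpace M := hMc.completeSpace_coe
  have hcs : ∀ (U W : e.car ≃ₗᵢ[ℂ] e.car), (∀ x, U (W x) = W (U x)) →
      ∀ x, U (W.symm x) = W.symm (U x) := fun U W h x => by
    apply W.injective
    rw [← h, W.apply_symm_apply, W.apply_symm_apply]
  have h1 : ∀ x ∈ M, U₁ x ∈ M := fun x hx =>
    ⟨fixSpace_orthogonal_map U₁ U₁ (fun _ => rfl) hx.1,
      fixSpace_orthogonal_map U₂ U₁ (fun x => (hc x).symm) hx.2⟩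
  have h1' : ∀ x ∈ M, U₁.symm x ∈ M := fun x hx =>
    ⟨fixSpace_orthogonal_map U₁ U₁.symm (hcs _ _ fun _ => rfl) hx.1,
      fixSpace_orthogonal_map U₂ U₁.symm (hcs _ _ fun x => (hc x).symm) hx.2⟩
  have h2 : ∀ x ∈ M, U₂ x ∈ M := fun x hx =>
    ⟨fixSpace_orthogonal_map U₁ U₂ hc hx.1,
      fixSpace_orthogonal_map U₂ U₂ (fun _ => rfl) hx.2⟩
  have h2' : ∀ x ∈ M, U₂.symm x ∈ M := fun x hx =>
    ⟨fixSpace_orthogonal_map U₁ U₂.symm (hcs _ _ hc) hx.1,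
      fixSpace_orthogonal_map U₂ U₂.symm (hcs _ _ fun _ => rfl) hx.2⟩
  have hemb : ∀ h : H, e.emb h ∈ M := by
    intro h
    constructor
    · refine (Submodule.mem_orthogonal _ _).2 fun f hf => ?_
      rw [← coemb_inner, hf₁ f hf, inner_zero_left]
    · refine (Submodule.mem_orthogonal _ _).2 fun f hf => ?_
      rw [← coemb_inner, hf₂ f hf, inner_zero_left]
  let J : H →ₗᵢ[ℂ] M :=
    { toLinearMap := e.emb.toLinearMap.codRestrict M hemb
      norm_map' := fun x => e.emb.norm_map x }
  have hJ : ∀ h, ((J h : M) : e.car) = e.emb h := fun _ => rfl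
  refine ⟨⟨M, J⟩, restrictU U₁ M h1 h1', restrictU U₂ M h2 h2', ?_, ?_, ?_, ?_, ?_, ?_⟩
  · exact fun x => Subtype.ext (hU₁ x)
  · exact fun x => Subtype.ext (hU₂ x)
  · exact fun x => Subtype.ext (hc x)
  · intro x hx
    have hx1 : (x : M).1 ∈ fixSpace U₁ := congrArg Subtype.val hx
    exact Subtype.ext (inner_self_eq_zero.1
      ((Submodule.mem_orthogonal _ _).1 (x : M).2.1 _ hx1))
  · intro x hx
    have hx1 : (x : M).1 ∈ fixSpace U₂ := congrArg Subtype.val hx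
    exact Subtype.ext (inner_self_eq_zero.1
      ((Submodule.mem_orthogonal _ _).1 (x : M).2.2 _ hx1))
  · intro z₁ z₂ hz₁ hz₂ x y
    rw [hR z₁ z₂ hz₁ hz₂ x y]
    have e2 := moebius_intertwine M.subtypeₗᵢ (restrictU U₂ M h2 h2') U₂ (fun _ => rfl) hz₂ (J x)
    have e1 := moebius_intertwine M.subtypeₗᵢ (restrictU U₁ M h1 h1') U₁ (fun _ => rfl) hz₁
      (moebius z₂ (uCLM (restrictU U₂ M h2 h2')) (J x))
    rw [e2] at e1
    change ⟪e.emb y, moebius z₁ (uCLM U₁) (moebius z₂ (uCLM U₂) (M.subtypeₗᵢ (J x)))⟫_ℂ = _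
    rw [← e1]
    rfl

/-- Let `A₁, A₂` be closed symmetric operators whose Cayley transforms
`V₁, V₂` commute whenever possible and suppose a generalized resolvent of the pair
`A₁, A₂` exists.  An arbitrary generalized resolvent `R_{u;z₁,z₂}(V₁,V₂)` is generated
by commuting unitary extensions without nonzero fixed elements iff the parameters
`Φ₁(z₁) = [(1/z₁)E − (2/z₁)(R_{u;z₁,0}+E)^{-1}]|_{N₀(V₁)}` and
`Φ₂(z₂) = [(1/z₂)E − (2/z₂)(R_{u;0,z₂}+E)^{-1}]|_{N₀(V₂)}` (extended to `0` by
continuity) belong to `S_{adm;V_j}(𝔻; N₀(V_j), N_∞(V_j))`, `j = 1, 2`. -/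
theorem statement6 {H : Type} [NormedAddCommGroup H] [InnerProductSpace ℂ H] [CompleteSpace H]
    [TopologicalSpace.SeparableSpace H]
    (A₁ A₂ : H →ₗ.[ℂ] H)
    (hA₁closed : IsClosed (A₁.graph : Set (H × H)))
    (hA₂closed : IsClosed (A₂.graph : Set (H × H)))
    (hA₁symm : ∀ x y : A₁.domain, ⟪A₁ x, (y : H)⟫_ℂ = ⟪(x : H), A₁ y⟫_ℂ)
    (hA₂symm : ∀ x y : A₂.domain, ⟪A₂ x, (y : H)⟫_ℂ = ⟪(x : H), A₂ y⟫_ℂ)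
    (V₁ V₂ : ClosedIsometry H)
    (hV₁ : IsCayleyOf V₁ A₁) (hV₂ : IsCayleyOf V₂ A₂)
    (hcomm : CommuteWherePossible V₁ V₂)
    (hex : ∃ R, IsGenResolventPair A₁ A₂ R)
    (Ru : ℂ → ℂ → (H →L[ℂ] H)) (hRu : IsGenResolventPairIso V₁ V₂ Ru) :
    (∃ (e : HilbertExt H) (U₁ U₂ : e.car ≃ₗᵢ[ℂ] e.car),
      ExtendsIso e.emb V₁ U₁ ∧ ExtendsIso e.emb V₂ U₂ ∧
      (∀ x : e.car, U₁ (U₂ x) = U₂ (U₁ x)) ∧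
      (∀ x : e.car, U₁ x = x → x = 0) ∧ (∀ x : e.car, U₂ x = x → x = 0) ∧
      ∀ (z₁ z₂ : ℂ), ‖z₁‖ ≠ 1 → ‖z₂‖ ≠ 1 → ∀ x y : H,
        ⟪y, Ru z₁ z₂ x⟫_ℂ =
          ⟪e.emb y, (moebius z₁ (uCLM U₁) * moebius z₂ (uCLM U₂)) (e.emb x)⟫_ℂ)
    ↔
    (∃ (Φ₁ : ℂ → (↥V₁.N0 →L[ℂ] H)) (Φ₂ : ℂ → (↥V₂.N0 →L[ℂ] H)),
      InClassS V₁ Φ₁ ∧ InClassS V₂ Φ₂ ∧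
      (∀ z ∈ ball (0 : ℂ) 1, z ≠ 0 → ∀ n : ↥V₁.N0,
        Φ₁ z n = z⁻¹ • (n : H) -
          (2 * z⁻¹) • (Ring.inverse (Ru z 0 + 1) : H →L[ℂ] H) (n : H)) ∧
      (∀ z ∈ ball (0 : ℂ) 1, z ≠ 0 → ∀ n : ↥V₂.N0,
        Φ₂ z n = z⁻¹ • (n : H) -
          (2 * z⁻¹) • (Ring.inverse (Ru 0 z + 1) : H →L[ℂ] H) (n : H)) ∧
      AdmissibleFor A₁ V₁ (fun l => Φ₁ ((l - Complex.I) / (l + Complex.I))) ∧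
      AdmissibleFor A₂ V₂ (fun l => Φ₂ ((l - Complex.I) / (l + Complex.I)))) := by
  have hR1 : ∀ (e : HilbertExt H) (U₁ U₂ : e.car ≃ₗᵢ[ℂ] e.car),
      (∀ (z₁ z₂ : ℂ), ‖z₁‖ ≠ 1 → ‖z₂‖ ≠ 1 → ∀ x y : H, ⟪y, Ru z₁ z₂ x⟫_ℂ =
        ⟪e.emb y, (moebius z₁ (uCLM U₁) * moebius z₂ (uCLM U₂)) (e.emb x)⟫_ℂ) →
      (∀ z ∈ ball (0 : ℂ) 1, z ≠ 0 → ∀ n : H,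
        z⁻¹ • n - (2 * z⁻¹) • (Ring.inverse (Ru z 0 + 1) : H →L[ℂ] H) n =
          transfer e.emb U₁ z n) ∧
      (∀ z ∈ ball (0 : ℂ) 1, z ≠ 0 → ∀ n : H,
        z⁻¹ • n - (2 * z⁻¹) • (Ring.inverse (Ru 0 z + 1) : H →L[ℂ] H) n =
          transfer e.emb U₂ z n) := by
    intro e U₁ U₂ hR
    constructor
    · intro z hz hz0 n
      have hz' := mem_ball_zero_iff.1 hz
      refine transfer_formula e.emb U₁ hz' hz0 _ (fun x y => ?_) n
      rw [hR z 0 hz'.ne (by simp) x y, moebius_zero, mul_one]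
    · intro z hz hz0 n
      have hz' := mem_ball_zero_iff.1 hz
      refine transfer_formula e.emb U₂ hz' hz0 _ (fun x y => ?_) n
      rw [hR 0 z (by simp) hz'.ne x y, moebius_zero, one_mul]
  have hclass : ∀ (e : HilbertExt H) (V : ClosedIsometry H) (U : e.car ≃ₗᵢ[ℂ] e.car),
      ExtendsIso e.emb V U →
      InClassS V (fun z => (transfer e.emb U z).comp V.N0.subtypeL) := by
    intro e V U hU
    refine ⟨?_, fun z hz => ?_, fun z hz n => transfer_N0 e.emb U hU (mem_ball_zero_iff.1 hz) n⟩
    · have := transfer_differentiableOn e.emb U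
      fun_prop
    · refine ContinuousLinearMap.opNorm_le_bound _ zero_le_one fun x => ?_
      rw [one_mul]
      exact norm_transfer_le e.emb U (mem_ball_zero_iff.1 hz) _
  constructor
  · rintro ⟨e, U₁, U₂, hU₁, hU₂, -, hf₁, hf₂, hR⟩
    obtain ⟨hT₁, hT₂⟩ := hR1 e U₁ U₂ hR
    refine ⟨_, _, hclass e V₁ U₁ hU₁, hclass e V₂ U₂ hU₂, fun z hz hz0 n => (hT₁ z hz hz0 n).symm,
      fun z hz hz0 n => (hT₂ z hz hz0 n).symm, ?_, ?_⟩
    · refine (admissible_iff e.emb U₁ hV₁ hU₁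
        (fun z => (transfer e.emb U₁ z).comp V₁.N0.subtypeL) (fun z _ _ n => rfl)).2 fun f hf => ?_
      rw [hf₁ f hf, map_zero]
    · refine (admissible_iff e.emb U₂ hV₂ hU₂
        (fun z => (transfer e.emb U₂ z).comp V₂.N0.subtypeL) (fun z _ _ n => rfl)).2 fun f hf => ?_
      rw [hf₂ f hf, map_zero]
  · rintro ⟨Φ₁, Φ₂, -, -, hΦ₁, hΦ₂, hadm₁, hadm₂⟩
    obtain ⟨-, e, U₁, U₂, hU₁, hU₂, hc, hR⟩ := hRu
    obtain ⟨hT₁, hT₂⟩ := hR1 e U₁ U₂ hR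
    exact exists_noFixed V₁ V₂ Ru e U₁ U₂ hU₁ hU₂ hc hR
      ((admissible_iff e.emb U₁ hV₁ hU₁ Φ₁
        fun z hz hz0 n => (hΦ₁ z hz hz0 n).trans (hT₁ z hz hz0 n)).1 hadm₁)
      ((admissible_iff e.emb U₂ hV₂ hU₂ Φ₂
        fun z hz hz0 n => (hΦ₂ z hz hz0 n).trans (hT₂ z hz hz0 n)).1 hadm₂)

end
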